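/- arXiv:2602.05304 — 2 statements merged into one kernel-verified Lean document; each statement's English description precedes it below -/
import Mathlib

section
/- Fix integers τ ≥ 1 and K > τ. If the sampling sequence has staleness bounded by τ up to horizon K, then for every k with τ ≤ k ≤ K−1, the SAGA gradient error e_k := g_k − ∇f(x_k) satisfies ‖e_k‖² ≤ 4 α² L² τ · U_k, where U_k := Σ_{j=1}^τ ‖g_{k−j}‖². -/
/-!
The error `g k - ∇f (x k)` is the staleness defect `∇fᵢ (x k) - h i k` of the sampled component
minus the mean of the defects of all components, so it is at most twice the largest defect. If
component `i` is sampled in the window `[m, k)`, then `h i k = ∇fᵢ (x j)` for some `j` in that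
window, and the Lipschitz bound together with the telescoping estimate for `‖x k - x j‖` bounds
every defect by `L * |α| * ∑ ‖g j‖` over the window. Cauchy–Schwarz turns the squared sum into a
sum of squares.
-/

open Finset
open scoped NNReal

section Averages

variable {ι E : Type*} [Fintype ι]

lemma hasGradientAt_sum_div [NormedAddCommGroup E] [InnerProductSpace ℝ E] [CompleteSpace E]
    {f : ι → E → ℝ} {f' : ι → E} {x : E} (hf : ∀ i, HasGradientAt (f i) (f' i) x) (c : ℝ) :
    HasGradientAt (fun z => (∑ i, f i z) / c) (c⁻¹ • ∑ i, f' i) x := by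
  have hsum : HasFDerivAt (fun z => c⁻¹ • ∑ i, f i z)
      (c⁻¹ • ∑ i, InnerProductSpace.toDual ℝ E (f' i)) x :=
    (HasFDerivAt.fun_sum fun i _ => (hf i).hasFDerivAt).const_smul c⁻¹
  rw [hasGradientAt_iff_hasFDerivAt]
  simpa [div_eq_inv_mul] using hsum

variable [SeminormedAddCommGroup E] [NormedSpace ℝ E]

lemma norm_inv_card_smul_sum_le [Nonempty ι] {v : ι → E} {B : ℝ} (hv : ∀ i, ‖v i‖ ≤ B) :
    ‖(Fintype.card ι : ℝ)⁻¹ • ∑ i, v i‖ ≤ B := by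
  have hcard : (0 : ℝ) < Fintype.card ι := Nat.cast_pos.2 Fintype.card_pos
  rw [norm_smul, norm_inv, Real.norm_natCast, inv_mul_le_iff₀ hcard]
  simpa using norm_sum_le_of_le univ fun i _ => hv i

lemma norm_sub_inv_card_smul_sum_le {v : ι → E} {B : ℝ} (hv : ∀ i, ‖v i‖ ≤ B) (i : ι) :
    ‖v i - (Fintype.card ι : ℝ)⁻¹ • ∑ j, v j‖ ≤ 2 * B := by
  have : Nonempty ι := ⟨i⟩
  calc ‖v i - (Fintype.card ι : ℝ)⁻¹ • ∑ j, v j‖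
      ≤ ‖v i‖ + ‖(Fintype.card ι : ℝ)⁻¹ • ∑ j, v j‖ := norm_sub_le _ _
    _ ≤ B + B := add_le_add (hv i) (norm_inv_card_smul_sum_le hv)
    _ = 2 * B := (two_mul B).symm

end Averages

lemma sum_Icc_one_sub_eq_sum_Ico {M : Type*} [AddCommMonoid M] (F : ℕ → M) {τ k : ℕ}
    (hk : τ ≤ k) : ∑ j ∈ Icc 1 τ, F (k - j) = ∑ j ∈ Ico (k - τ) k, F j := by
  simpa [Ico_add_one_right_eq_Icc] using sum_Ico_reflect F 1 (Nat.succ_le_succ hk)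

/-- The SAGA recursion for a finite family of operators `G i` (in the application, the component
gradients) along a sampling sequence `idx` with step size `α`: `x` are the iterates, `g` the search
directions and `h i k` is the value of `G i` stored just before step `k`. The initial point `x 0`
and the initial table `h · 0` are left free. -/
structure IsSAGARun {ι E : Type*} [Fintype ι] [DecidableEq ι] [AddCommGroup E] [Module ℝ E]
    (G : ι → E → E) (idx : ℕ → ι) (α : ℝ) (x g : ℕ → E) (h : ι → ℕ → E) : Prop where
  memory_succ : ∀ i k, h i (k + 1) = if idx k = i then G i (x k) else h i k
  direction_eq : ∀ k, g k = (Fintype.card ι : ℝ)⁻¹ • (∑ i, h i k) + (G (idx k) (x k) - h (idx k) k)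
  iterate_succ : ∀ k, x (k + 1) = x k - α • g k

namespace IsSAGARun

section Algebra

variable {ι E : Type*} [Fintype ι] [DecidableEq ι] [AddCommGroup E] [Module ℝ E]
  {G : ι → E → E} {idx : ℕ → ι} {α : ℝ} {x g : ℕ → E} {h : ι → ℕ → E}

lemma exists_memory_eq (run : IsSAGARun G idx α x g h) {j k : ℕ} (hjk : j < k) :
    ∃ l ∈ Ico j k, h (idx j) k = G (idx j) (x l) := by
  induction k, hjk using Nat.le_induction with
  | base => exact ⟨j, by simp, by simp [run.memory_succ]⟩
  | succ k hjk ih =>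
    by_cases hsampled : idx k = idx j
    · exact ⟨k, mem_Ico.2 ⟨by omega, k.lt_succ_self⟩, by rw [run.memory_succ, if_pos hsampled]⟩
    · obtain ⟨l, hl, hmemory⟩ := ih
      exact ⟨l, Ico_subset_Ico_right k.le_succ hl,
        by rw [run.memory_succ, if_neg hsampled, hmemory]⟩

lemma direction_sub_mean_eq (run : IsSAGARun G idx α x g h) (k : ℕ) :
    g k - (Fintype.card ι : ℝ)⁻¹ • ∑ i, G i (x k) =
      (G (idx k) (x k) - h (idx k) k) -
        (Fintype.card ι : ℝ)⁻¹ • ∑ i, (G i (x k) - h i k) := by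
  rw [run.direction_eq, sum_sub_distrib, smul_sub]
  abel

end Algebra

variable {ι E : Type*} [Fintype ι] [DecidableEq ι] [SeminormedAddCommGroup E] [NormedSpace ℝ E]
  {G : ι → E → E} {idx : ℕ → ι} {α : ℝ} {x g : ℕ → E} {h : ι → ℕ → E} {L : ℝ≥0}

lemma norm_iterate_sub_le (run : IsSAGARun G idx α x g h) {j k : ℕ} (hjk : j ≤ k) :
    ‖x k - x j‖ ≤ |α| * ∑ l ∈ Ico j k, ‖g l‖ := by
  have hstep (l : ℕ) : dist (x l) (x (l + 1)) = |α| * ‖g l‖ := by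
    rw [run.iterate_succ, dist_self_sub_right, norm_smul, Real.norm_eq_abs]
  calc ‖x k - x j‖ = dist (x j) (x k) := (dist_eq_norm' _ _).symm
    _ ≤ ∑ l ∈ Ico j k, dist (x l) (x (l + 1)) := dist_le_Ico_sum_dist x hjk
    _ = |α| * ∑ l ∈ Ico j k, ‖g l‖ := by simp only [hstep, mul_sum]

lemma norm_apply_sub_memory_le (run : IsSAGARun G idx α x g h) {i : ι}
    (hG : LipschitzWith L (G i)) {m k : ℕ} (hsampled : ∃ j ∈ Ico m k, idx j = i) :
    ‖G i (x k) - h i k‖ ≤ L * (|α| * ∑ p ∈ Ico m k, ‖g p‖) := by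
  obtain ⟨j, hj, rfl⟩ := hsampled
  obtain ⟨hmj, hjk⟩ := mem_Ico.1 hj
  obtain ⟨l, hl, hmemory⟩ := run.exists_memory_eq hjk
  obtain ⟨hjl, hlk⟩ := mem_Ico.1 hl
  calc ‖G (idx j) (x k) - h (idx j) k‖ = ‖G (idx j) (x k) - G (idx j) (x l)‖ := by rw [hmemory]
    _ ≤ L * ‖x k - x l‖ := hG.norm_sub_le _ _
    _ ≤ L * (|α| * ∑ p ∈ Ico l k, ‖g p‖) := by gcongr; exact run.norm_iterate_sub_le hlk.le
    _ ≤ L * (|α| * ∑ p ∈ Ico m k, ‖g p‖) := by gcongr; exact hmj.trans hjl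

lemma norm_direction_sub_mean_le (run : IsSAGARun G idx α x g h)
    (hG : ∀ i, LipschitzWith L (G i)) {m k : ℕ} (hstale : ∀ i, ∃ j ∈ Ico m k, idx j = i) :
    ‖g k - (Fintype.card ι : ℝ)⁻¹ • ∑ i, G i (x k)‖ ≤
      2 * (L * (|α| * ∑ j ∈ Ico m k, ‖g j‖)) := by
  rw [run.direction_sub_mean_eq]
  exact norm_sub_inv_card_smul_sum_le
    (fun i => run.norm_apply_sub_memory_le (hG i) (hstale i)) (idx k)

theorem norm_direction_sub_mean_sq_le (run : IsSAGARun G idx α x g h)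
    (hG : ∀ i, LipschitzWith L (G i)) {m k : ℕ} (hstale : ∀ i, ∃ j ∈ Ico m k, idx j = i) :
    ‖g k - (Fintype.card ι : ℝ)⁻¹ • ∑ i, G i (x k)‖ ^ 2 ≤
      4 * α ^ 2 * L ^ 2 * #(Ico m k) * ∑ j ∈ Ico m k, ‖g j‖ ^ 2 := by
  calc ‖g k - (Fintype.card ι : ℝ)⁻¹ • ∑ i, G i (x k)‖ ^ 2
      ≤ (2 * (L * (|α| * ∑ j ∈ Ico m k, ‖g j‖))) ^ 2 := by
        gcongr; exact run.norm_direction_sub_mean_le hG hstale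
    _ = 4 * α ^ 2 * L ^ 2 * (∑ j ∈ Ico m k, ‖g j‖) ^ 2 := by rw [← sq_abs α]; ring
    _ ≤ 4 * α ^ 2 * L ^ 2 * (#(Ico m k) * ∑ j ∈ Ico m k, ‖g j‖ ^ 2) := by
        gcongr; exact sq_sum_le_card_mul_sum_sq
    _ = 4 * α ^ 2 * L ^ 2 * #(Ico m k) * ∑ j ∈ Ico m k, ‖g j‖ ^ 2 := by ring

end IsSAGARun

theorem saga_gradient_error_general {ι E : Type*} [Fintype ι] [DecidableEq ι]
    [NormedAddCommGroup E] [InnerProductSpace ℝ E] [CompleteSpace E]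
    {fi : ι → E → ℝ} {f : E → ℝ} {idx : ℕ → ι} {α : ℝ} {x g : ℕ → E} {h : ι → ℕ → E} {L : ℝ≥0}
    (hdiff : ∀ i, Differentiable ℝ (fi i)) (hsmooth : ∀ i, LipschitzWith L (gradient (fi i)))
    (hf : ∀ z, f z = (∑ i, fi i z) / Fintype.card ι)
    (run : IsSAGARun (fun i => gradient (fi i)) idx α x g h) {τ k : ℕ} (hk : τ ≤ k)
    (hstale : ∀ i, ∃ j, k - τ ≤ j ∧ j < k ∧ idx j = i) :
    ‖g k - gradient f (x k)‖ ^ 2 ≤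
      4 * α ^ 2 * L ^ 2 * τ * ∑ j ∈ Icc 1 τ, ‖g (k - j)‖ ^ 2 := by
  have hgrad : gradient f (x k) = (Fintype.card ι : ℝ)⁻¹ • ∑ i, gradient (fi i) (x k) := by
    rw [funext hf]
    exact (hasGradientAt_sum_div (fun i => (hdiff i (x k)).hasGradientAt) _).gradient
  have hwindow : ∀ i, ∃ j ∈ Ico (k - τ) k, idx j = i := by
    simpa only [mem_Ico, and_assoc] using hstale
  have hcard : #(Ico (k - τ) k) = τ := by rw [Nat.card_Ico, Nat.sub_sub_self hk]
  rw [hgrad, sum_Icc_one_sub_eq_sum_Ico (fun j => ‖g j‖ ^ 2) hk]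
  simpa only [hcard] using run.norm_direction_sub_mean_sq_le hsmooth hwindow

/- STATEMENT 4 (SAGA gradient error bound under bounded staleness). -/
theorem saga_gradient_error (d N : ℕ) (hd : 1 ≤ d) (hN : 1 ≤ N) (L : ℝ) (hL : 0 < L)
    (fi : Fin N → EuclideanSpace ℝ (Fin d) → ℝ)
    (hdiff : ∀ i, Differentiable ℝ (fi i))
    (hsmooth : ∀ i x y, ‖gradient (fi i) x - gradient (fi i) y‖ ≤ L * ‖x - y‖)
    (f : EuclideanSpace ℝ (Fin d) → ℝ)
    (hf : ∀ z, f z = (∑ i, fi i z) / N)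
    (idx : ℕ → Fin N) (α : ℝ) (hα : 0 < α)
    (x g : ℕ → EuclideanSpace ℝ (Fin d))
    (h : Fin N → ℕ → EuclideanSpace ℝ (Fin d))
    (hx0 : x 0 = 0)
    (hh0 : ∀ i, h i 0 = 0)
    (hhrec : ∀ i k, h i (k + 1) = if idx k = i then gradient (fi i) (x k) else h i k)
    (hg : ∀ k, g k = (N : ℝ)⁻¹ • (∑ i, h i k)
      + (gradient (fi (idx k)) (x k) - h (idx k) k))
    (hxrec : ∀ k, x (k + 1) = x k - α • g k)
    (τ K : ℕ) (hτ : 1 ≤ τ) (hK : τ < K)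
    (hstale : ∀ i : Fin N, ∀ k : ℕ, τ ≤ k → k ≤ K - 1 →
      ∃ j : ℕ, k - τ ≤ j ∧ j < k ∧ idx j = i) :
    ∀ k : ℕ, τ ≤ k → k ≤ K - 1 →
      ‖g k - gradient f (x k)‖ ^ 2 ≤
        4 * α ^ 2 * L ^ 2 * τ * ∑ j ∈ Finset.Icc 1 τ, ‖g (k - j)‖ ^ 2 := by
  intro k hk hkK
  exact saga_gradient_error_general (L := ⟨L, hL.le⟩) hdiff
    (fun i => lipschitzWith_iff_norm_sub_le.2 (hsmooth i))
    (by simpa only [Fintype.card_fin] using hf)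
    ⟨hhrec, by simpa only [Fintype.card_fin] using hg, hxrec⟩ hk (fun i => hstale i k hk hkK)
end

section
/- Fix an integer τ ≥ 1 and set α = 1/(16 L τ). For any sampling sequence, the SAG directions satisfy ‖g_k‖ ≤ 6 L B for every k with 0 ≤ k ≤ τ. -/
/-!
The direction `g k` is the average of the gradient memory after its update at step `k`, so it is
bounded by the largest gradient met so far. A `K`-Lipschitz gradient that vanishes within distance
`B` of `x 0` has norm at most `K * (‖x k - x 0‖ + B)` at `x k`; hence `‖x k - x 0‖ + B` grows by a
factor of at most `1 + |α| * K` per step (a discrete Grönwall argument). With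
`α = 1 / (16 * L * τ)` these factors multiply to at most `exp (1 / 16) < 6` over `τ` steps.
-/

open scoped NNReal

lemma one_add_div_pow_le_exp {c : ℝ} (hc : 0 ≤ c) {k n : ℕ} (hkn : k ≤ n) :
    (1 + c / n) ^ k ≤ Real.exp c :=
  calc (1 + c / n) ^ k ≤ Real.exp (c / n) ^ k := by
        gcongr
        rw [add_comm]
        exact Real.add_one_le_exp _
    _ = Real.exp (c * (k / n)) := by rw [← Real.exp_nat_mul, mul_div_left_comm]
    _ ≤ Real.exp c := by
        gcongr
        exact mul_le_of_le_one_right hc (div_le_one_of_le₀ (mod_cast hkn) n.cast_nonneg)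

lemma one_add_abs_step_mul_pow_le_six {L : ℝ} (hL : 0 < L) {k τ : ℕ} (hk : k ≤ τ) :
    (1 + |1 / (16 * L * τ)| * L) ^ k ≤ 6 := by
  have rate_eq : |1 / (16 * L * τ)| * L = 1 / 16 / τ := by
    rw [abs_of_nonneg (by positivity)]
    field_simp
  calc (1 + |1 / (16 * L * τ)| * L) ^ k ≤ Real.exp (1 / 16) := by
        rw [rate_eq]
        exact one_add_div_pow_le_exp (by norm_num) hk
    _ ≤ Real.exp 1 := by gcongr; norm_num
    _ ≤ 6 := by linarith [Real.exp_one_lt_three]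

lemma gradient_eq_zero_of_isLocalMin {F : Type*} [NormedAddCommGroup F] [InnerProductSpace ℝ F]
    [CompleteSpace F] {f : F → ℝ} {p : F} (hp : IsLocalMin f p) : gradient f p = 0 := by
  rw [gradient, hp.fderiv_eq_zero, map_zero]

lemma norm_le_of_lipschitzWith_of_eq_zero {E F : Type*} [SeminormedAddCommGroup E]
    [SeminormedAddCommGroup F] {K : ℝ≥0} {v : E → F} {p c : E} {B : ℝ} (hv : LipschitzWith K v)
    (hp : v p = 0) (hpc : ‖p - c‖ ≤ B) (y : E) : ‖v y‖ ≤ K * (‖y - c‖ + B) :=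
  calc ‖v y‖ = ‖v y - v p‖ := by rw [hp, sub_zero]
    _ ≤ K * ‖y - p‖ := hv.norm_sub_le y p
    _ ≤ K * (‖y - c‖ + B) := by
        gcongr
        linarith [norm_sub_le_norm_sub_add_norm_sub y c p, norm_sub_rev c p]

lemma norm_inv_card_smul_sum_le_s10 {ι E : Type*} [Fintype ι] [Nonempty ι] [SeminormedAddCommGroup E]
    [NormedSpace ℝ E] {u : ι → E} {C : ℝ} (hu : ∀ i, ‖u i‖ ≤ C) :
    ‖(Fintype.card ι : ℝ)⁻¹ • ∑ i, u i‖ ≤ C := by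
  have hcard : (0 : ℝ) < Fintype.card ι := mod_cast Fintype.card_pos
  rw [norm_smul, norm_inv, Real.norm_natCast, inv_mul_le_iff₀ hcard]
  simpa using norm_sum_le_of_le Finset.univ fun i _ ↦ hu i

section SAG

variable {ι E : Type*} [Fintype ι] [DecidableEq ι] [SeminormedAddCommGroup E] [NormedSpace ℝ E]

/-- A run of the stochastic average gradient method with step size `α` on the vector fields `v i`
(the gradients of the summands, in applications). At step `k` the index `idx k` is sampled, `x k`
is the iterate, `g k` the direction, and `h i k` the value of `v i` stored before step `k`. The
last-visit times of the usual description are replaced by the recursion `memory_succ`. -/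
structure IsSAGRun (v : ι → E → E) (α : ℝ) (idx : ℕ → ι) (x g : ℕ → E) (h : ι → ℕ → E) :
    Prop where
  memory_zero : ∀ i, h i 0 = 0
  memory_succ : ∀ i k, h i (k + 1) = if idx k = i then v i (x k) else h i k
  direction_eq : ∀ k, g k = (Fintype.card ι : ℝ)⁻¹ • (∑ i, h i k)
    + (Fintype.card ι : ℝ)⁻¹ • (v (idx k) (x k) - h (idx k) k)
  iterate_succ : ∀ k, x (k + 1) = x k - α • g k

namespace IsSAGRun

variable {v : ι → E → E} {α : ℝ} {idx : ℕ → ι} {x g : ℕ → E} {h : ι → ℕ → E}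

lemma direction_eq_average_memory_succ (run : IsSAGRun v α idx x g h) (k : ℕ) :
    g k = (Fintype.card ι : ℝ)⁻¹ • ∑ i, h i (k + 1) := by
  have memory_update (i : ι) :
      h i (k + 1) = h i k + if idx k = i then v i (x k) - h i k else 0 := by
    rw [run.memory_succ]
    split_ifs <;> simp
  rw [run.direction_eq, ← smul_add, Finset.sum_congr rfl fun i _ ↦ memory_update i,
    Finset.sum_add_distrib, Finset.sum_ite_eq, if_pos (Finset.mem_univ _)]

lemma norm_memory_succ_le (run : IsSAGRun v α idx x g h) {C : ℝ} {k : ℕ}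
    (hmem : ∀ i, ‖h i k‖ ≤ C) (hv : ∀ i, ‖v i (x k)‖ ≤ C) (i : ι) : ‖h i (k + 1)‖ ≤ C := by
  rw [run.memory_succ]
  split_ifs
  · exact hv i
  · exact hmem i

lemma norm_direction_le (run : IsSAGRun v α idx x g h) {C : ℝ} {k : ℕ}
    (hmem : ∀ i, ‖h i (k + 1)‖ ≤ C) : ‖g k‖ ≤ C := by
  have : Nonempty ι := ⟨idx 0⟩
  rw [run.direction_eq_average_memory_succ]
  exact norm_inv_card_smul_sum_le_s10 hmem

lemma norm_iterate_succ_sub_le (run : IsSAGRun v α idx x g h) (c : E) (k : ℕ) :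
    ‖x (k + 1) - c‖ ≤ ‖x k - c‖ + |α| * ‖g k‖ := by
  rw [run.iterate_succ, sub_right_comm]
  exact (norm_sub_le _ _).trans_eq (by rw [norm_smul, Real.norm_eq_abs])

variable {K : ℝ≥0} {p : ι → E} {B : ℝ}

lemma norm_memory_succ_le_of_lipschitzWith (run : IsSAGRun v α idx x g h)
    (hv : ∀ i, LipschitzWith K (v i)) (hp : ∀ i, v i (p i) = 0) (hpB : ∀ i, ‖p i - x 0‖ ≤ B)
    {R : ℝ} {k : ℕ} (hx : ‖x k - x 0‖ + B ≤ R) (hmem : ∀ i, ‖h i k‖ ≤ K * R) (i : ι) :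
    ‖h i (k + 1)‖ ≤ K * R := by
  refine run.norm_memory_succ_le hmem (fun j ↦ ?_) i
  exact (norm_le_of_lipschitzWith_of_eq_zero (hv j) (hp j) (hpB j) (x k)).trans (by gcongr)

lemma norm_iterate_sub_add_le_and_norm_memory_le (run : IsSAGRun v α idx x g h)
    (hv : ∀ i, LipschitzWith K (v i)) (hp : ∀ i, v i (p i) = 0) (hpB : ∀ i, ‖p i - x 0‖ ≤ B)
    (k : ℕ) :
    ‖x k - x 0‖ + B ≤ B * (1 + |α| * K) ^ k ∧ ∀ i, ‖h i k‖ ≤ K * (B * (1 + |α| * K) ^ k) := by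
  have hB : 0 ≤ B := (norm_nonneg _).trans (hpB (idx 0))
  induction k with
  | zero => exact ⟨by simp, fun i ↦ by rw [run.memory_zero, norm_zero]; positivity⟩
  | succ k ih =>
    set R := B * (1 + |α| * K) ^ k
    have : 0 ≤ R := by positivity
    have R_succ : B * (1 + |α| * K) ^ (k + 1) = R + |α| * (K * R) := by ring
    have memory_le := run.norm_memory_succ_le_of_lipschitzWith hv hp hpB ih.1 ih.2
    rw [R_succ]
    constructor
    · calc ‖x (k + 1) - x 0‖ + B ≤ ‖x k - x 0‖ + |α| * ‖g k‖ + B := by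
            gcongr
            exact run.norm_iterate_succ_sub_le (x 0) k
        _ = ‖x k - x 0‖ + B + |α| * ‖g k‖ := by ring
        _ ≤ R + |α| * (K * R) := by
            gcongr
            · exact ih.1
            · exact run.norm_direction_le memory_le
    · intro i
      exact (memory_le i).trans (by gcongr; exact le_add_of_nonneg_right (by positivity))

end IsSAGRun

theorem sag_bounded_directions_general {v : ι → E → E} {α : ℝ} {idx : ℕ → ι} {x g : ℕ → E}
    {h : ι → ℕ → E} (run : IsSAGRun v α idx x g h) {K : ℝ≥0} (hv : ∀ i, LipschitzWith K (v i))
    {p : ι → E} (hp : ∀ i, v i (p i) = 0) {B : ℝ} (hpB : ∀ i, ‖p i - x 0‖ ≤ B) (k : ℕ) :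
    ‖g k‖ ≤ K * B * (1 + |α| * K) ^ k := by
  obtain ⟨hx, hmem⟩ := run.norm_iterate_sub_add_le_and_norm_memory_le hv hp hpB k
  rw [mul_assoc]
  exact run.norm_direction_le (run.norm_memory_succ_le_of_lipschitzWith hv hp hpB hx hmem)

end SAG

/- STATEMENT 10 (SAG bounded directions during the burn-in period). -/
theorem sag_bounded_directions (d N : ℕ) (hd : 1 ≤ d) (hN : 1 ≤ N) (L : ℝ) (hL : 0 < L)
    (fi : Fin N → EuclideanSpace ℝ (Fin d) → ℝ)
    (hdiff : ∀ i, Differentiable ℝ (fi i))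
    (hsmooth : ∀ i x y, ‖gradient (fi i) x - gradient (fi i) y‖ ≤ L * ‖x - y‖)
    (f : EuclideanSpace ℝ (Fin d) → ℝ)
    (hf : ∀ z, f z = (∑ i, fi i z) / N)
    (xstar : EuclideanSpace ℝ (Fin d)) (hmin : ∀ y, f xstar ≤ f y)
    (xistar : Fin N → EuclideanSpace ℝ (Fin d))
    (hxi : ∀ i y, fi i (xistar i) ≤ fi i y)
    (B : ℝ) (hB : B = max ‖xstar‖ (⨆ i, ‖xistar i‖))
    (τ : ℕ) (hτ : 1 ≤ τ)
    (idx : ℕ → Fin N) (α : ℝ) (hα : α = 1 / (16 * L * τ))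
    (x g : ℕ → EuclideanSpace ℝ (Fin d))
    (h : Fin N → ℕ → EuclideanSpace ℝ (Fin d))
    (hx0 : x 0 = 0)
    (hh0 : ∀ i, h i 0 = 0)
    (hhrec : ∀ i k, h i (k + 1) = if idx k = i then gradient (fi i) (x k) else h i k)
    (hg : ∀ k, g k = (N : ℝ)⁻¹ • (∑ i, h i k)
      + (N : ℝ)⁻¹ • (gradient (fi (idx k)) (x k) - h (idx k) k))
    (hxrec : ∀ k, x (k + 1) = x k - α • g k) :
    ∀ k : ℕ, k ≤ τ → ‖g k‖ ≤ 6 * L * B := by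
  intro k hk
  have run : IsSAGRun (fun i ↦ gradient (fi i)) α idx x g h :=
    ⟨hh0, hhrec, by simpa only [Fintype.card_fin] using hg, hxrec⟩
  have lipschitz (i : Fin N) : LipschitzWith ⟨L, hL.le⟩ (gradient (fi i)) :=
    lipschitzWith_iff_norm_sub_le.2 (hsmooth i)
  have critical (i : Fin N) : gradient (fi i) (xistar i) = 0 :=
    gradient_eq_zero_of_isLocalMin (.of_forall (hxi i))
  have minimizer_le (i : Fin N) : ‖xistar i - x 0‖ ≤ B := by
    rw [hx0, sub_zero, hB]
    exact (le_ciSup (Set.finite_range fun i ↦ ‖xistar i‖).bddAbove i).trans (le_max_right _ _)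
  have hB0 : 0 ≤ B := (norm_nonneg _).trans (minimizer_le (idx 0))
  calc ‖g k‖ ≤ L * B * (1 + |α| * L) ^ k :=
        sag_bounded_directions_general run lipschitz critical minimizer_le k
    _ ≤ L * B * 6 := by
        gcongr
        exact hα ▸ one_add_abs_step_mul_pow_le_six hL hk
    _ = 6 * L * B := by ring
end
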